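/- Under Assumption 1 (correctness of structure recovery with bounded in-degree), fix i ∈ [m] and an integer K with |A(i)| ≤ K ≤ m − 2, and let M = max { I(X_S → X_i) : S ⊆ [m]∖{i}, |S| = K }. Then a subset S ⊆ [m]∖{i} with |S| = K satisfies I(X_S → X_i) = M if and only if A(i) ⊆ S, and consequently A(i) = ⋂ { S ⊆ [m]∖{i} : |S| = K and I(X_S → X_i) = M }. -/

import Mathlib

open Finset

/-- Probability of an event under the probability mass function `p` on a finite space. -/
noncomputable def pr {Ω : Type} [Fintype Ω] (p : Ω → ℝ) (E : Set Ω) : ℝ :=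
  ∑ ω : Ω, E.indicator p ω

/-- Shannon conditional mutual information `I(A ; B | C)` of finite-valued random variables
on a finite probability space with pmf `p` (terms with vanishing probability contribute `0`,
by the conventions `Real.log 0 = 0`, `x / 0 = 0`). -/
noncomputable def cmi {Ω α β γ : Type} [Fintype Ω] [Fintype α] [Fintype β] [Fintype γ]
    (p : Ω → ℝ) (A : Ω → α) (B : Ω → β) (C : Ω → γ) : ℝ :=
  ∑ a : α, ∑ b : β, ∑ c : γ,
    pr p {ω | A ω = a ∧ B ω = b ∧ C ω = c} *
      Real.log (pr p {ω | A ω = a ∧ B ω = b ∧ C ω = c} * pr p {ω | C ω = c} /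
        (pr p {ω | A ω = a ∧ C ω = c} * pr p {ω | B ω = b ∧ C ω = c}))

/-- `A` and `B` are conditionally independent given `C` (under the pmf `p`). -/
def CondIndep {Ω α β γ : Type} [Fintype Ω] (p : Ω → ℝ)
    (A : Ω → α) (B : Ω → β) (C : Ω → γ) : Prop :=
  ∀ (a : α) (b : β) (c : γ),
    pr p {ω | A ω = a ∧ B ω = b ∧ C ω = c} * pr p {ω | C ω = c}
      = pr p {ω | A ω = a ∧ C ω = c} * pr p {ω | B ω = b ∧ C ω = c}

/-- Trajectories of `m` processes over `n` time steps with alphabet `𝒳`: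
`ω i j` is the value of process `i` at (0-indexed) time `j`. -/
abbrev Traj (m n : ℕ) (𝒳 : Type) := Fin m → Fin n → 𝒳

/-- The past `X_S^{j-1}`: the values of the processes in `S` at times strictly before `j`;
all other entries are masked by `none`. -/
def past {m n : ℕ} {𝒳 : Type} (S : Finset (Fin m)) (j : Fin n) (ω : Traj m n 𝒳) :
    Fin m → Fin n → Option 𝒳 :=
  fun k t => if k ∈ S ∧ t < j then some (ω k t) else none

/-- Causally conditioned directed information
`I(X_S → X_i ‖ X_T) := Σ_{j=1}^{n} I(X_S^{j-1} ; X_{i,j} | X_i^{j-1}, X_T^{j-1})`. -/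
noncomputable def di {m n : ℕ} {𝒳 : Type} [Fintype 𝒳] [DecidableEq 𝒳]
    (p : Traj m n 𝒳 → ℝ) (S : Finset (Fin m)) (i : Fin m) (T : Finset (Fin m)) : ℝ :=
  ∑ j : Fin n,
    cmi p (past S j) (fun ω => ω i j) (fun ω => (past {i} j ω, past T j ω))

/-- Assumption 1: the joint distribution is strictly positive (and is a pmf), and at each
time `j` the variables `X_{1,j}, …, X_{m,j}` are mutually conditionally independent given
the full past `X_{[m]}^{j-1}` (stated in the division-free form
`P(joint ∧ past) · P(past)^{m-1} = Π_i P(X_{i,j} = x_i ∧ past)`). -/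
def Assumption1 {m n : ℕ} {𝒳 : Type} [Fintype 𝒳] [DecidableEq 𝒳]
    (p : Traj m n 𝒳 → ℝ) : Prop :=
  (∀ ω, 0 < p ω) ∧ (∑ ω : Traj m n 𝒳, p ω = 1) ∧
    ∀ (j : Fin n) (x : Fin m → 𝒳) (h : Fin m → Fin n → Option 𝒳),
      pr p {ω | (∀ i, ω i j = x i) ∧ past Finset.univ j ω = h} *
          pr p {ω | past Finset.univ j ω = h} ^ (m - 1)
        = ∏ i : Fin m, pr p {ω | ω i j = x i ∧ past Finset.univ j ω = h}

/-- `S ⊆ [m]∖{i}` is a causal Markov blanket of `X_i` if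
`I(X_{[m]∖({i}∪S)} → X_i ‖ X_S) = 0`. -/
def IsCausalBlanket {m n : ℕ} {𝒳 : Type} [Fintype 𝒳] [DecidableEq 𝒳]
    (p : Traj m n 𝒳 → ℝ) (i : Fin m) (S : Finset (Fin m)) : Prop :=
  S ⊆ Finset.univ.erase i ∧ di p (Finset.univ.erase i \ S) i S = 0

/-- A causal Markov boundary `A(i)` of `X_i` is a causal Markov blanket of minimum
cardinality. -/
def IsCausalBoundary {m n : ℕ} {𝒳 : Type} [Fintype 𝒳] [DecidableEq 𝒳]
    (p : Traj m n 𝒳 → ℝ) (i : Fin m) (A : Finset (Fin m)) : Prop :=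
  IsCausalBlanket p i A ∧
    ∀ B : Finset (Fin m), IsCausalBlanket p i B → A.card ≤ B.card

/-!
Write `H(X_i ‖ X_S)` for the causally conditioned entropy `∑ⱼ H(X_{i,j} | X_i^{j-1}, X_S^{j-1})`.
Directed information is the entropy drop `I(X_S → X_i ‖ X_T) = H(X_i ‖ X_T) - H(X_i ‖ X_{S ∪ T})`,
and by Gibbs' inequality `H(X_i ‖ X_S)` decreases in `S`. Hence `S` is a blanket iff
`H(X_i ‖ X_S)` has the least possible value `H(X_i ‖ X_{[m] ∖ {i}})`, i.e. iff `I(X_S → X_i)` is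
as large as possible; by the equality case of Gibbs this happens iff the pasts of `X_i` and `X_S`
determine the conditional law of `X_{i,j}` given the full past. Two trajectories can be glued
along processes on which they agree, and the glued one still has positive probability, so
blankets are closed under intersection. The minimal one is therefore contained in all of them,
and the blankets are exactly the sets containing it.
-/

section FiniteProbability

variable {Ω α β γ : Type} [Fintype Ω] {p : Ω → ℝ}

lemma pr_eq_sum_filter (P : Ω → Prop) [DecidablePred P] :
    pr p {ω | P ω} = ∑ ω with P ω, p ω := by
  simp only [pr, Set.indicator_apply, Set.mem_ofPred_eq, sum_filter]

lemma pr_nonneg (hp : ∀ ω, 0 ≤ p ω) (E : Set Ω) : 0 ≤ pr p E :=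
  sum_nonneg fun ω _ => Set.indicator_nonneg (fun ω _ => hp ω) ω

lemma pr_pos (hp : ∀ ω, 0 ≤ p ω) {E : Set Ω} {ω : Ω} (hω : ω ∈ E) (hpω : 0 < p ω) :
    0 < pr p E := by
  refine sum_pos' (fun ω _ => Set.indicator_nonneg (fun ω _ => hp ω) ω) ⟨ω, mem_univ ω, ?_⟩
  rwa [Set.indicator_of_mem hω]

lemma sum_pr_mul [Fintype α] (A : Ω → α) (f : α → ℝ) :
    ∑ a, pr p {ω | A ω = a} * f a = ∑ ω, p ω * f (A ω) := by
  classical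
  rw [← sum_fiberwise univ A]
  refine sum_congr rfl fun a _ => ?_
  rw [pr_eq_sum_filter, sum_mul]
  exact sum_congr rfl fun ω hω => by rw [(mem_filter.1 hω).2]

lemma sum_pr_and_le (hp : ∀ ω, 0 ≤ p ω) (s : Finset β) (B : Ω → β) (P : Ω → Prop) :
    ∑ b ∈ s, pr p {ω | B ω = b ∧ P ω} ≤ pr p {ω | P ω} := by
  classical
  simp only [pr_eq_sum_filter, and_comm (b := P _), ← filter_filter]
  exact sum_fiberwise_le_sum_of_sum_fiber_nonneg fun b _ => sum_nonneg fun ω _ => hp ω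

/-- The conditional probability `P(B = b | V)`, as a random variable; it is `0` where the
observed value of `V` has probability zero. -/
noncomputable def condProb (p : Ω → ℝ) (B : Ω → β) (V : Ω → α) (b : β) (ω : Ω) : ℝ :=
  pr p {ω' | B ω' = b ∧ V ω' = V ω} / pr p {ω' | V ω' = V ω}

/-- The Shannon conditional entropy `H(B | V) = - E [log P(B | V)]`. -/
noncomputable def condEntropy (p : Ω → ℝ) (B : Ω → β) (V : Ω → α) : ℝ :=
  -∑ ω, p ω * Real.log (condProb p B V (B ω) ω)

lemma condProb_nonneg (hp : ∀ ω, 0 ≤ p ω) (B : Ω → β) (V : Ω → α) (b : β) (ω : Ω) :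
    0 ≤ condProb p B V b ω :=
  div_nonneg (pr_nonneg hp _) (pr_nonneg hp _)

lemma condProb_self_pos (hp : ∀ ω, 0 ≤ p ω) (B : Ω → β) (V : Ω → α) {ω : Ω} (hω : 0 < p ω) :
    0 < condProb p B V (B ω) ω :=
  div_pos (pr_pos hp ⟨rfl, rfl⟩ hω) (pr_pos hp rfl hω)

lemma factorsThrough_condProb (B : Ω → β) (V : Ω → α) (b : β) :
    (condProb p B V b).FactorsThrough V := fun ω ω' h => by
  simp only [condProb, h]

lemma sum_condProb_le_one (hp : ∀ ω, 0 ≤ p ω) (s : Finset β) (B : Ω → β) (V : Ω → α) (ω : Ω) :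
    ∑ b ∈ s, condProb p B V b ω ≤ 1 := by
  simp only [condProb, ← sum_div]
  exact div_le_one_of_le₀ (sum_pr_and_le hp s B _) (pr_nonneg hp _)

lemma condEntropy_congr (B : Ω → β) {V : Ω → α} {W : Ω → γ}
    (h : ∀ ω ω', V ω = V ω' ↔ W ω = W ω') : condEntropy p B V = condEntropy p B W := by
  simp only [condEntropy, condProb, h]

/-- The averaging property that characterizes `P(B = b | V)` as a conditional expectation. -/
lemma sum_mul_condProb_mul [DecidableEq β] (hp : ∀ ω, 0 ≤ p ω) (B : Ω → β) (V : Ω → α) (b : β)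
    {g : Ω → ℝ} (hg : g.FactorsThrough V) :
    ∑ ω, p ω * (condProb p B V b ω * g ω) = ∑ ω with B ω = b, p ω * g ω := by
  classical
  let P : Ω → ℝ := fun ω => pr p {ω' | V ω' = V ω}
  have hP : ∀ {ω ω'}, V ω' = V ω → P ω = P ω' := fun h => by simp only [P, h]
  calc ∑ ω, p ω * (condProb p B V b ω * g ω)
      = ∑ ω, ∑ ω' with B ω' = b ∧ V ω' = V ω, p ω' * g ω' / P ω' * p ω := by
        refine sum_congr rfl fun ω _ => ?_
        rw [condProb, pr_eq_sum_filter (fun ω' => B ω' = b ∧ V ω' = V ω), sum_div, sum_mul,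
          mul_sum]
        refine sum_congr rfl fun ω' hω' => ?_
        have hV : V ω' = V ω := (mem_filter.1 hω').2.2
        rw [hg hV, ← hP hV]
        ring
    _ = ∑ ω' with B ω' = b, ∑ ω with V ω = V ω', p ω' * g ω' / P ω' * p ω :=
        sum_comm' fun ω ω' => by simp only [mem_filter, mem_univ, true_and, eq_comm, and_comm]
    _ = ∑ ω' with B ω' = b, p ω' * g ω' := by
        refine sum_congr rfl fun ω' _ => ?_
        rw [← mul_sum, ← pr_eq_sum_filter]
        rcases (hp ω').eq_or_lt with h0 | hpos
        · simp [← h0]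
        · have hPω' : 0 < P ω' := pr_pos hp rfl hpos
          exact div_mul_cancel₀ _ hPω'.ne'

lemma sum_mul_condProb_div_condProb_le (hp : ∀ ω, 0 ≤ p ω) (B : Ω → β)
    {V : Ω → α} {W : Ω → γ} (hWV : W.FactorsThrough V) :
    ∑ ω, p ω * (condProb p B W (B ω) ω / condProb p B V (B ω) ω) ≤ ∑ ω, p ω := by
  classical
  have hratio (b : β) : (fun ω => condProb p B W b ω / condProb p B V b ω).FactorsThrough V :=
    fun ω ω' h => by
      simp only [factorsThrough_condProb B V b h, factorsThrough_condProb B W b (hWV h)]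
  calc ∑ ω, p ω * (condProb p B W (B ω) ω / condProb p B V (B ω) ω)
      = ∑ b ∈ univ.image B, ∑ ω with B ω = b, p ω * (condProb p B W b ω / condProb p B V b ω) := by
        rw [← sum_fiberwise_of_maps_to fun ω _ => mem_image_of_mem B (mem_univ ω)]
        exact sum_congr rfl fun b _ => sum_congr rfl fun ω hω => by rw [(mem_filter.1 hω).2]
    _ = ∑ b ∈ univ.image B,
          ∑ ω, p ω * (condProb p B V b ω * (condProb p B W b ω / condProb p B V b ω)) :=
        sum_congr rfl fun b _ => (sum_mul_condProb_mul hp B V b (hratio b)).symm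
    _ ≤ ∑ b ∈ univ.image B, ∑ ω, p ω * condProb p B W b ω := by
        gcongr with b _ ω
        · exact hp ω
        · rw [mul_div_left_comm]
          exact mul_le_of_le_one_right (condProb_nonneg hp B W b ω) (div_self_le_one _)
    _ = ∑ ω, p ω * ∑ b ∈ univ.image B, condProb p B W b ω := by
        rw [sum_comm]
        simp only [mul_sum]
    _ ≤ ∑ ω, p ω :=
        sum_le_sum fun ω _ => mul_le_of_le_one_right (hp ω) (sum_condProb_le_one hp _ B W ω)

lemma mul_log_condProb_sub_le (hp : ∀ ω, 0 ≤ p ω) (B : Ω → β) (V : Ω → α) (W : Ω → γ) (ω : Ω) :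
    p ω * Real.log (condProb p B W (B ω) ω) - p ω * Real.log (condProb p B V (B ω) ω)
      ≤ p ω * (condProb p B W (B ω) ω / condProb p B V (B ω) ω) - p ω := by
  rcases (hp ω).eq_or_lt with h0 | hpos
  · simp [← h0]
  have hW := condProb_self_pos hp B W hpos
  have hV := condProb_self_pos hp B V hpos
  rw [← mul_sub, ← Real.log_div hW.ne' hV.ne', ← mul_sub_one]
  exact mul_le_mul_of_nonneg_left (Real.log_le_sub_one_of_pos (div_pos hW hV)) hpos.le

lemma condEntropy_le_of_factorsThrough (hp : ∀ ω, 0 ≤ p ω) (B : Ω → β)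
    {V : Ω → α} {W : Ω → γ} (hWV : W.FactorsThrough V) :
    condEntropy p B V ≤ condEntropy p B W := by
  have hlog := sum_le_sum fun ω (_ : ω ∈ univ) => mul_log_condProb_sub_le hp B V W ω
  rw [sum_sub_distrib, sum_sub_distrib] at hlog
  have hle := sum_mul_condProb_div_condProb_le hp B hWV
  unfold condEntropy
  linarith

lemma condProb_self_eq_of_condEntropy_eq (hp : ∀ ω, 0 ≤ p ω) (B : Ω → β)
    {V : Ω → α} {W : Ω → γ} (hWV : W.FactorsThrough V)
    (h : condEntropy p B W = condEntropy p B V) {ω : Ω} (hω : 0 < p ω) :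
    condProb p B W (B ω) ω = condProb p B V (B ω) ω := by
  have hle := fun ω (_ : ω ∈ univ) => mul_log_condProb_sub_le hp B V W ω
  have hsum := sum_mul_condProb_div_condProb_le hp B hWV
  have hterm := (sum_eq_sum_iff_of_le hle).1 (by
    refine le_antisymm (sum_le_sum hle) ?_
    rw [sum_sub_distrib, sum_sub_distrib]
    unfold condEntropy at h
    linarith) ω (mem_univ ω)
  have hW := condProb_self_pos hp B W hω
  have hV := condProb_self_pos hp B V hω
  rw [← mul_sub, ← Real.log_div hW.ne' hV.ne', ← mul_sub_one] at hterm
  by_contra hne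
  exact (Real.log_lt_sub_one_of_pos (div_pos hW hV) (mt (div_eq_one_iff_eq hV.ne').1 hne)).ne
    (mul_left_cancel₀ hω.ne' hterm)

lemma condEntropy_eq_iff_condProb_eq (hp : ∀ ω, 0 < p ω) {B : Ω → β}
    {V : Ω → α} {W : Ω → γ} (hWV : W.FactorsThrough V)
    (hBV : ∀ b ω, ∃ ω', B ω' = b ∧ V ω' = V ω) :
    condEntropy p B W = condEntropy p B V ↔ condProb p B W = condProb p B V := by
  refine ⟨fun h => ?_, fun h => by simp only [condEntropy, h]⟩
  ext b ω
  obtain ⟨ω', rfl, hV⟩ := hBV b ω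
  rw [← factorsThrough_condProb B V _ hV, ← factorsThrough_condProb B W _ (hWV hV)]
  exact condProb_self_eq_of_condEntropy_eq (fun ω => (hp ω).le) B hWV h (hp ω')

lemma condProb_eq_of_factorsThrough (hp : ∀ ω, 0 < p ω) {B : Ω → β} {V : Ω → α} {W : Ω → γ}
    (hWV : W.FactorsThrough V) (h : ∀ b, (condProb p B V b).FactorsThrough W) :
    condProb p B W = condProb p B V := by
  classical
  have hp' : ∀ ω, 0 ≤ p ω := fun ω => (hp ω).le
  ext b ω
  let g : Ω → ℝ := fun ω' => if W ω' = W ω then 1 else 0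
  have hg : g.FactorsThrough V := fun ω₁ ω₂ hV => by simp only [g, hWV hV]
  have hpos : 0 < pr p {ω' | W ω' = W ω} := pr_pos hp' rfl (hp ω)
  rw [condProb, div_eq_iff hpos.ne']
  calc pr p {ω' | B ω' = b ∧ W ω' = W ω}
      = ∑ ω' with B ω' = b, p ω' * g ω' := by
        rw [pr_eq_sum_filter, ← filter_filter, sum_filter]
        simp only [g, mul_ite, mul_one, mul_zero]
    _ = ∑ ω', p ω' * (condProb p B V b ω' * g ω') := (sum_mul_condProb_mul hp' B V b hg).symm
    _ = ∑ ω' with W ω' = W ω, condProb p B V b ω * p ω' := by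
        rw [sum_filter]
        refine sum_congr rfl fun ω' _ => ?_
        by_cases hW : W ω' = W ω
        · simp only [g, hW, if_true, h b hW, mul_one, mul_comm]
        · simp only [g, hW, if_false, mul_zero]
    _ = condProb p B V b ω * pr p {ω' | W ω' = W ω} := by rw [← mul_sum, ← pr_eq_sum_filter]

/-- The intersection property of conditional independence; `hglue` says that, given `U`, every
value of `V` is compatible with every value of `W`. -/
lemma condProb_eq_of_glue {δ ε : Type} (hp : ∀ ω, 0 < p ω) {B : Ω → β} {U : Ω → α} {V : Ω → γ}
    {W : Ω → δ} {Z : Ω → ε} (hUZ : U.FactorsThrough Z)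
    (hglue : ∀ ω ω', U ω = U ω' → ∃ ω'', V ω'' = V ω ∧ W ω'' = W ω')
    (hV : condProb p B V = condProb p B Z) (hW : condProb p B W = condProb p B Z) :
    condProb p B U = condProb p B Z := by
  refine condProb_eq_of_factorsThrough hp hUZ fun b ω ω' hU => ?_
  obtain ⟨ω'', hVω, hWω⟩ := hglue ω ω' hU
  calc condProb p B Z b ω
      = condProb p B Z b ω'' := by rw [← hV, factorsThrough_condProb B V b hVω]
    _ = condProb p B Z b ω' := by rw [← hW, factorsThrough_condProb B W b hWω]

lemma cmi_eq_condEntropy_sub [Fintype α] [Fintype β] [Fintype γ] (hp : ∀ ω, 0 ≤ p ω)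
    (A : Ω → α) (B : Ω → β) (C : Ω → γ) :
    cmi p A B C = condEntropy p B C - condEntropy p B fun ω => (A ω, C ω) := by
  have hlotus := sum_pr_mul (p := p) (fun ω => (A ω, B ω, C ω)) fun x =>
    Real.log (pr p {ω' | A ω' = x.1 ∧ B ω' = x.2.1 ∧ C ω' = x.2.2} * pr p {ω' | C ω' = x.2.2} /
      (pr p {ω' | A ω' = x.1 ∧ C ω' = x.2.2} * pr p {ω' | B ω' = x.2.1 ∧ C ω' = x.2.2}))
  simp only [Fintype.sum_prod_type, Prod.mk.injEq] at hlotus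
  rw [cmi, hlotus, condEntropy, condEntropy, neg_sub_neg, ← sum_sub_distrib]
  refine sum_congr rfl fun ω _ => ?_
  rcases (hp ω).eq_or_lt with h0 | hpos
  · simp [← h0]
  rw [← mul_sub, ← Real.log_div (condProb_self_pos hp B _ hpos).ne'
    (condProb_self_pos hp B C hpos).ne']
  simp only [condProb, Prod.mk.injEq, and_left_comm (b := A _ = A ω)]
  rw [div_div_div_eq]

end FiniteProbability

section Processes

variable {m n : ℕ} {𝒳 : Type}

lemma past_eq_past_iff {S : Finset (Fin m)} {j : Fin n} {ω ω' : Traj m n 𝒳} :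
    past S j ω = past S j ω' ↔ ∀ k ∈ S, ∀ t < j, ω k t = ω' k t := by
  simp only [past, funext_iff]
  refine forall_congr' fun k => ⟨fun h hk t ht => by simpa [hk, ht] using h t, fun h t => ?_⟩
  split_ifs with hkt
  · rw [h hkt.1 t hkt.2]
  · rfl

lemma past_factorsThrough_of_subset {S T : Finset (Fin m)} (hST : S ⊆ T) (j : Fin n) :
    (past (𝒳 := 𝒳) S j).FactorsThrough (past T j) := fun _ _ h =>
  past_eq_past_iff.2 fun k hk => past_eq_past_iff.1 h k (hST hk)

lemma exists_past_eq_past_eq {S T : Finset (Fin m)} {j : Fin n} {ω ω' : Traj m n 𝒳}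
    (h : past (S ∩ T) j ω = past (S ∩ T) j ω') :
    ∃ ω'', past S j ω'' = past S j ω ∧ past T j ω'' = past T j ω' := by
  simp only [past_eq_past_iff, mem_inter] at h ⊢
  refine ⟨S.piecewise ω ω', fun k hk t _ => by rw [S.piecewise_eq_of_mem _ _ hk],
    fun k hk t ht => ?_⟩
  by_cases hkS : k ∈ S
  · rw [S.piecewise_eq_of_mem _ _ hkS, h k ⟨hkS, hk⟩ t ht]
  · rw [S.piecewise_eq_of_notMem _ _ hkS]

lemma exists_apply_eq_past_eq (i : Fin m) (S : Finset (Fin m)) (j : Fin n) (x : 𝒳)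
    (ω : Traj m n 𝒳) : ∃ ω', ω' i j = x ∧ past S j ω' = past S j ω := by
  refine ⟨Function.update ω i (Function.update (ω i) j x), by simp,
    past_eq_past_iff.2 fun k _ t ht => ?_⟩
  rcases eq_or_ne k i with rfl | hk
  · simp [ht.ne]
  · simp [hk]

variable [Fintype 𝒳] {p : Traj m n 𝒳 → ℝ}

/-- The causally conditioned entropy `H(X_i ‖ X_S) = ∑ⱼ H(X_{i,j} | X_i^{j-1}, X_S^{j-1})`; the
two pasts are encoded as the single past of `insert i S`. -/
noncomputable def causalEntropy (p : Traj m n 𝒳 → ℝ) (i : Fin m) (S : Finset (Fin m)) : ℝ :=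
  ∑ j, condEntropy p (fun ω => ω i j) (past (insert i S) j)

lemma condEntropy_past_anti (hp : ∀ ω, 0 ≤ p ω) (i : Fin m) {S T : Finset (Fin m)} (hST : S ⊆ T)
    (j : Fin n) :
    condEntropy p (fun ω => ω i j) (past (insert i T) j)
      ≤ condEntropy p (fun ω => ω i j) (past (insert i S) j) :=
  condEntropy_le_of_factorsThrough hp _
    (past_factorsThrough_of_subset (insert_subset_insert i hST) j)

lemma causalEntropy_anti (hp : ∀ ω, 0 ≤ p ω) (i : Fin m) {S T : Finset (Fin m)} (hST : S ⊆ T) :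
    causalEntropy p i T ≤ causalEntropy p i S :=
  sum_le_sum fun j _ => condEntropy_past_anti hp i hST j

lemma causalEntropy_eq_iff_condProb_eq (hp : ∀ ω, 0 < p ω) (i : Fin m) {S T : Finset (Fin m)}
    (hST : S ⊆ T) :
    causalEntropy p i S = causalEntropy p i T ↔
      ∀ j, condProb p (fun ω => ω i j) (past (insert i S) j)
        = condProb p (fun ω => ω i j) (past (insert i T) j) := by
  rw [eq_comm, causalEntropy, causalEntropy, sum_eq_sum_iff_of_le fun j _ =>
    condEntropy_past_anti (fun ω => (hp ω).le) i hST j]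
  simp only [mem_univ, true_imp_iff]
  refine forall_congr' fun j => eq_comm.trans ?_
  exact condEntropy_eq_iff_condProb_eq hp
    (past_factorsThrough_of_subset (insert_subset_insert i hST) j)
    (exists_apply_eq_past_eq i _ j)

variable [DecidableEq 𝒳]

lemma di_eq_causalEntropy_sub (hp : ∀ ω, 0 ≤ p ω) (S : Finset (Fin m)) (i : Fin m)
    (T : Finset (Fin m)) : di p S i T = causalEntropy p i T - causalEntropy p i (S ∪ T) := by
  have hcond (j : Fin n) (ω ω' : Traj m n 𝒳) :
      (past {i} j ω, past T j ω) = (past {i} j ω', past T j ω') ↔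
        past (insert i T) j ω = past (insert i T) j ω' := by
    simp only [Prod.mk.injEq, past_eq_past_iff, mem_insert, mem_singleton, or_imp, forall_and,
      forall_eq]
  have hjoint (j : Fin n) (ω ω' : Traj m n 𝒳) :
      (past S j ω, past {i} j ω, past T j ω) = (past S j ω', past {i} j ω', past T j ω') ↔
        past (insert i (S ∪ T)) j ω = past (insert i (S ∪ T)) j ω' := by
    simp only [Prod.mk.injEq, past_eq_past_iff, mem_insert, mem_singleton, mem_union, or_imp,
      forall_and, forall_eq, and_left_comm]
  simp only [di, causalEntropy, ← sum_sub_distrib, cmi_eq_condEntropy_sub hp]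
  exact sum_congr rfl fun j _ => congrArg₂ _ (condEntropy_congr _ (hcond j))
    (condEntropy_congr _ (hjoint j))

lemma di_empty_mono (hp : ∀ ω, 0 ≤ p ω) (i : Fin m) {S T : Finset (Fin m)} (hST : S ⊆ T) :
    di p S i ∅ ≤ di p T i ∅ := by
  simpa only [di_eq_causalEntropy_sub hp, union_empty, sub_le_sub_iff_left]
    using causalEntropy_anti hp i hST

lemma isCausalBlanket_iff_causalEntropy_eq (hp : ∀ ω, 0 ≤ p ω) {i : Fin m} {S : Finset (Fin m)}
    (hS : S ⊆ univ.erase i) :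
    IsCausalBlanket p i S ↔ causalEntropy p i S = causalEntropy p i (univ.erase i) := by
  rw [IsCausalBlanket, and_iff_right hS, di_eq_causalEntropy_sub hp, sdiff_union_of_subset hS,
    sub_eq_zero]

lemma isCausalBlanket_iff_di_eq (hp : ∀ ω, 0 ≤ p ω) {i : Fin m} {S : Finset (Fin m)}
    (hS : S ⊆ univ.erase i) :
    IsCausalBlanket p i S ↔ di p S i ∅ = di p (univ.erase i) i ∅ := by
  simp only [isCausalBlanket_iff_causalEntropy_eq hp hS, di_eq_causalEntropy_sub hp, union_empty,
    sub_right_inj]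

lemma IsCausalBlanket.mono (hp : ∀ ω, 0 ≤ p ω) {i : Fin m} {S T : Finset (Fin m)}
    (hS : IsCausalBlanket p i S) (hST : S ⊆ T) (hT : T ⊆ univ.erase i) :
    IsCausalBlanket p i T := by
  have hSmin := (isCausalBlanket_iff_causalEntropy_eq hp hS.1).1 hS
  rw [isCausalBlanket_iff_causalEntropy_eq hp hT]
  exact le_antisymm ((causalEntropy_anti hp i hST).trans_eq hSmin) (causalEntropy_anti hp i hT)

lemma IsCausalBlanket.inter (hp : ∀ ω, 0 < p ω) {i : Fin m} {S T : Finset (Fin m)}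
    (hS : IsCausalBlanket p i S) (hT : IsCausalBlanket p i T) : IsCausalBlanket p i (S ∩ T) := by
  have hST : S ∩ T ⊆ univ.erase i := inter_subset_left.trans hS.1
  have blanket_iff {R : Finset (Fin m)} (hR : R ⊆ univ.erase i) :=
    (isCausalBlanket_iff_causalEntropy_eq (fun ω => (hp ω).le) hR).trans
      (causalEntropy_eq_iff_condProb_eq hp i hR)
  refine (blanket_iff hST).2 fun j => ?_
  refine condProb_eq_of_glue hp (past_factorsThrough_of_subset (insert_subset_insert i hST) j)
    (fun ω ω' h => ?_) ((blanket_iff hS.1).1 hS j) ((blanket_iff hT.1).1 hT j)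
  rw [insert_inter_distrib] at h
  exact exists_past_eq_past_eq h

lemma IsCausalBoundary.isCausalBlanket_iff_subset (hp : ∀ ω, 0 < p ω) {i : Fin m}
    {A : Finset (Fin m)} (hA : IsCausalBoundary p i A) {S : Finset (Fin m)}
    (hS : S ⊆ univ.erase i) : IsCausalBlanket p i S ↔ A ⊆ S := by
  refine ⟨fun h => ?_, fun h => hA.1.mono (fun ω => (hp ω).le) h hS⟩
  exact inter_eq_left.1 (eq_of_subset_of_card_le inter_subset_left (hA.2 _ (hA.1.inter hp h)))

lemma IsCausalBlanket.isGreatest_di (hp : ∀ ω, 0 ≤ p ω) {i : Fin m} {A : Finset (Fin m)}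
    (hA : IsCausalBlanket p i A) {K : ℕ} (hAK : A.card ≤ K) (hK : K ≤ m - 1) :
    IsGreatest {r : ℝ | ∃ S ⊆ univ.erase i, S.card = K ∧ r = di p S i ∅}
      (di p (univ.erase i) i ∅) := by
  constructor
  · obtain ⟨S, hAS, hS, hSK⟩ := exists_subsuperset_card_eq hA.1 hAK (by simpa using hK)
    exact ⟨S, hS, hSK, ((isCausalBlanket_iff_di_eq hp hS).1 (hA.mono hp hAS hS)).symm⟩
  · rintro _ ⟨S, hS, -, rfl⟩
    exact di_empty_mono hp i hS

end Processes

lemma mem_iff_forall_mem_of_card_eq {ι : Type*} {A F : Finset ι} {K : ℕ}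
    (hAF : A ⊆ F) (hAK : A.card ≤ K) (hKF : K < F.card) {k : ι} :
    k ∈ A ↔ ∀ S ⊆ F, S.card = K → A ⊆ S → k ∈ S := by
  classical
  refine ⟨fun hk S _ _ hAS => hAS hk, fun h => ?_⟩
  by_contra hk
  have hcard : K ≤ (F.erase k).card := by
    have := pred_card_le_card_erase (s := F) (a := k)
    omega
  obtain ⟨S, hAS, hSF, hSK⟩ :=
    exists_subsuperset_card_eq (subset_erase.2 ⟨hAF, hk⟩) hAK hcard
  obtain ⟨hSF, hkS⟩ := subset_erase.1 hSF
  exact hkS (h S hSF hSK hAS)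

theorem stmt_11_general {m n : ℕ} {𝒳 : Type} [Fintype 𝒳] [DecidableEq 𝒳]
    (p : Traj m n 𝒳 → ℝ) (hp : ∀ ω, 0 < p ω)
    (i : Fin m) (A : Finset (Fin m)) (hA : IsCausalBoundary p i A)
    (K : ℕ) (hK1 : A.card ≤ K) (hK2 : K + 2 ≤ m)
    (M : ℝ)
    (hM : IsGreatest
      {r : ℝ | ∃ S ⊆ univ.erase i, S.card = K ∧ r = di p S i ∅} M) :
    (∀ S ⊆ univ.erase i, S.card = K → (di p S i ∅ = M ↔ A ⊆ S)) ∧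
      (∀ k : Fin m, k ∈ A ↔
        ∀ S ⊆ univ.erase i, S.card = K → di p S i ∅ = M → k ∈ S) := by
  have hp' : ∀ ω, 0 ≤ p ω := fun ω => (hp ω).le
  obtain rfl := hM.unique (hA.1.isGreatest_di hp' hK1 (by omega))
  have hmax : ∀ S ⊆ univ.erase i, (di p S i ∅ = di p (univ.erase i) i ∅ ↔ A ⊆ S) := fun S hS =>
    (isCausalBlanket_iff_di_eq hp' hS).symm.trans (hA.isCausalBlanket_iff_subset hp hS)
  have hK : K < (univ.erase i).card := by
    rw [card_erase_of_mem (mem_univ i), card_fin]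
    omega
  refine ⟨fun S hS _ => hmax S hS, fun k => ?_⟩
  rw [mem_iff_forall_mem_of_card_eq hA.1.1 hK1 hK]
  exact forall₃_congr fun S hS _ => by rw [hmax S hS]

/-- correctness of structure recovery with bounded in-degree.
Under Assumption 1, fix `i`, the causal Markov boundary `A(i)`, and `K` with
`|A(i)| ≤ K ≤ m − 2`. Let `M` be the maximum of `I(X_S → X_i)` over all `S ⊆ [m]∖{i}`
with `|S| = K`. Then such an `S` attains `M` iff `A(i) ⊆ S`, and `A(i)` is the
intersection of all the maximizing sets. -/
theorem stmt_11 {m n : ℕ} (hm : 2 ≤ m) (hn : 1 ≤ n)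
    {𝒳 : Type} [Fintype 𝒳] [DecidableEq 𝒳] [Nonempty 𝒳]
    (p : Traj m n 𝒳 → ℝ) (hp : Assumption1 p)
    (i : Fin m) (A : Finset (Fin m)) (hA : IsCausalBoundary p i A)
    (K : ℕ) (hK1 : A.card ≤ K) (hK2 : K ≤ m - 2)
    (M : ℝ)
    (hM : IsGreatest
      {r : ℝ | ∃ S ⊆ Finset.univ.erase i, S.card = K ∧ r = di p S i ∅} M) :
    (∀ S ⊆ Finset.univ.erase i, S.card = K → (di p S i ∅ = M ↔ A ⊆ S)) ∧
      (∀ k : Fin m, k ∈ A ↔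
        ∀ S ⊆ Finset.univ.erase i, S.card = K → di p S i ∅ = M → k ∈ S) :=
  stmt_11_general p hp.1 i A hA K hK1 (by omega) M hM
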